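/- arXiv:1206.4900 — 4 statements merged into one kernel-verified Lean document; each statement's English description precedes it below -/
import Mathlib

section
/- (Proposition 1, identifiability sharpness.) Let h : ℂ^N → ℝ^M have measurement distance D(h) ≥ 1. Then ⌊(D(h) − 1)/2⌋ is the maximum sparsity level of identifiable outliers: there exists an outlier vector a_o ∈ ℝ^M with ‖a_o‖₀ = ⌊(D(h) − 1)/2⌋ + 1 that is not identifiable, i.e., there exist v_o ∈ ℂ^N and a pair (v, a) ≠ (v_o, a_o) with h(v) + a = h(v_o) + a_o and ‖a‖₀ ≤ ‖a_o‖₀. -/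
/-- The ℓ0-pseudonorm: number of nonzero entries of a vector in ℝ^M. -/
noncomputable def l0 {M : ℕ} (a : Fin M → ℝ) : ℕ :=
  (Finset.univ.filter fun i => a i ≠ 0).card

/-- Proposition 1 (identifiability sharpness): if `D ≥ 1` is the measurement distance
of `h` and `⌊(D − 1)/2⌋ + 1 ≤ M`, then there exists an outlier vector `a₀` with
`‖a₀‖₀ = ⌊(D − 1)/2⌋ + 1` that is not identifiable. -/
theorem identifiability_sharpness {N M : ℕ} (hN : 1 ≤ N) (hM : 1 ≤ M)
    (h : (Fin N → ℂ) → (Fin M → ℝ)) (D : ℕ) (hD : 1 ≤ D)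
    (hDM : (D - 1) / 2 + 1 ≤ M)
    (hDle : ∀ v v' : Fin N → ℂ, v ≠ v' → D ≤ l0 (h v - h v'))
    (hDeq : ∃ v v' : Fin N → ℂ, v ≠ v' ∧ l0 (h v - h v') = D) :
    ∃ a₀ : Fin M → ℝ, l0 a₀ = (D - 1) / 2 + 1 ∧
      ∃ (v₀ : Fin N → ℂ) (v : Fin N → ℂ) (a : Fin M → ℝ),
        (v, a) ≠ (v₀, a₀) ∧ h v + a = h v₀ + a₀ ∧ l0 a ≤ l0 a₀ := by
  classical
  obtain ⟨v, v', hne, hd⟩ := hDeq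
  have hk : (D - 1) / 2 + 1 ≤ (Finset.univ.filter fun i => (h v - h v') i ≠ 0).card := by
    have : (Finset.univ.filter fun i => (h v - h v') i ≠ 0).card = D := hd
    omega
  obtain ⟨T, hTS, hT⟩ := Finset.exists_subset_card_eq hk
  have h1 : l0 (fun i => if i ∈ T then (h v - h v') i else 0) = (D - 1) / 2 + 1 := by
    rw [← hT, l0]
    congr 1
    ext i
    have := @hTS i
    simp only [Finset.mem_filter, Finset.mem_univ, true_and] at this ⊢
    by_cases hi : i ∈ T <;> simp_all
  have h2 : l0 (fun i => if i ∈ T then 0 else -(h v - h v') i) = D - ((D - 1) / 2 + 1) := by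
    rw [← hT, ← hd, l0, l0, ← Finset.card_sdiff_of_subset hTS]
    congr 1
    ext i
    simp only [Finset.mem_filter, Finset.mem_univ, true_and, Finset.mem_sdiff]
    by_cases hi : i ∈ T
    · simp [hi]
    · simp only [hi, if_false, neg_ne_zero, not_false_eq_true, and_true]
  refine ⟨_, h1, v', v, fun i => if i ∈ T then 0 else -(h v - h v') i, ?_, ?_, ?_⟩
  · intro he
    exact hne (Prod.mk.inj he).1
  · funext i
    by_cases hi : i ∈ T <;> simp [hi]
  · rw [h1, h2]
    omega
end

section
/- (Proposition 2, equality.) Let H be a real M × n matrix such that every collection of n rows of H is linearly independent (in particular H has full column rank n ≤ M). Then the measurement distance of the linear mapping x ↦ Hx satisfies D := min over x ≠ 0 in ℝ^n of ‖Hx‖₀ = M − n + 1 = M + 1 − rank(H). -/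
theorem eq_zero_of_vanish {M n : ℕ} (hn : 1 ≤ n)
    (H : Matrix (Fin M) (Fin n) ℝ)
    (hrows : ∀ s : Finset (Fin M), s.card = n →
      LinearIndependent ℝ (fun i : s => H i))
    (s : Finset (Fin M)) (hs : s.card = n) (x : Fin n → ℝ)
    (hx : ∀ i ∈ s, H.mulVec x i = 0) : x = 0 := by
  have hne : Nonempty s := by
    have : s.Nonempty := Finset.card_pos.mp (by omega)
    exact this.to_subtype
  have hspan := (hrows s hs).span_eq_top_of_card_eq_finrank (by simp [hs])
  have hmem : x ∈ Submodule.span ℝ (Set.range (fun i : s => H i)) := by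
    rw [hspan]; trivial
  have key : ∀ y ∈ Submodule.span ℝ (Set.range (fun i : s => H i)), y ⬝ᵥ x = 0 := by
    intro y hy
    induction hy using Submodule.span_induction with
    | mem y hy =>
      obtain ⟨i, rfl⟩ := hy
      exact hx i i.2
    | zero => simp
    | add a b _ _ ha hb => rw [add_dotProduct, ha, hb, add_zero]
    | smul c a _ ha => rw [smul_dotProduct, ha, smul_zero]
  exact dotProduct_self_eq_zero.mp (key x hmem)

theorem l0_add_zeros {M : ℕ} (a : Fin M → ℝ) :
    (Finset.univ.filter fun i => a i = 0).card + l0 a = M := by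
  have h := Finset.card_filter_add_card_filter_not
    (s := (Finset.univ : Finset (Fin M))) (fun i => a i = 0)
  simpa [l0] using h

/-- Proposition 2 (equality): if every collection of `n` rows of the real `M × n`
matrix `H` is linearly independent (`n ≤ M`), then the measurement distance
`D = min_{x ≠ 0} ‖Hx‖₀` of `x ↦ Hx` equals `M − n + 1 = M + 1 − rank(H)`. -/
theorem linear_measurement_distance_eq {M n : ℕ} (hn : 1 ≤ n) (hnM : n ≤ M)
    (H : Matrix (Fin M) (Fin n) ℝ)
    (hrows : ∀ s : Finset (Fin M), s.card = n →
      LinearIndependent ℝ (fun i : s => H i)) (D : ℕ)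
    (hDle : ∀ x : Fin n → ℝ, x ≠ 0 → D ≤ l0 (H.mulVec x))
    (hDeq : ∃ x : Fin n → ℝ, x ≠ 0 ∧ l0 (H.mulVec x) = D) :
    D = M - n + 1 ∧ D = M + 1 - H.rank := by
  have hrank : H.rank = n := by
    have hinj : Function.Injective H.mulVecLin := by
      rw [← LinearMap.ker_eq_bot, LinearMap.ker_eq_bot']
      intro x hx
      obtain ⟨s, -, hs⟩ := Finset.exists_subset_card_eq
        (s := (Finset.univ : Finset (Fin M))) (n := n) (by simpa using hnM)
      exact eq_zero_of_vanish hn H hrows s hs x (fun i _ => congrFun hx i)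
    rw [Matrix.rank, LinearMap.finrank_range_of_inj hinj]
    simp
  have hlow : M + 1 ≤ D + n := by
    obtain ⟨x, hx0, hxD⟩ := hDeq
    by_contra hcon
    have h := l0_add_zeros (H.mulVec x)
    obtain ⟨s, hsub, hs⟩ := Finset.exists_subset_card_eq
      (s := Finset.univ.filter fun i => H.mulVec x i = 0) (n := n) (by omega)
    exact hx0 (eq_zero_of_vanish hn H hrows s hs x
      (fun i hi => (Finset.mem_filter.mp (hsub hi)).2))
  have hup : D + n ≤ M + 1 := by
    obtain ⟨t, -, ht⟩ := Finset.exists_subset_card_eq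
      (s := (Finset.univ : Finset (Fin M))) (n := n - 1) (by simp; omega)
    let f : (Fin n → ℝ) →ₗ[ℝ] (t → ℝ) :=
      (LinearMap.funLeft ℝ ℝ (fun i : t => (i : Fin M))).comp H.mulVecLin
    have hker : LinearMap.ker f ≠ ⊥ := by
      apply LinearMap.ker_ne_bot_of_finrank_lt
      simp [ht]; omega
    obtain ⟨x, hx, hx0⟩ := (Submodule.ne_bot_iff _).mp hker
    have h1 := hDle x hx0
    have h2 := l0_add_zeros (H.mulVec x)
    have h3 : t ⊆ Finset.univ.filter fun i => H.mulVec x i = 0 := by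
      intro i hi
      refine Finset.mem_filter.mpr ⟨Finset.mem_univ _, ?_⟩
      exact congrFun (LinearMap.mem_ker.mp hx) ⟨i, hi⟩
    have h4 := Finset.card_le_card h3
    omega
  rw [hrank]
  omega
end

section
/- (Corollary 1, observability for the linear model.) Let H be a real M × n matrix such that every collection of n rows of H is linearly independent (n ≤ M). Then every nonzero outlier vector a ∈ ℝ^M with ‖a‖₀ ≤ M − n is observable for the linear measurement model: for every x_o ∈ ℝ^n there is no x ∈ ℝ^n with Hx = Hx_o + a. -/
/-- Corollary 1 (observability for the linear model): if every collection of `n` rows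
of `H` is linearly independent (`n ≤ M`), every nonzero outlier `a` with
`‖a‖₀ ≤ M − n` is observable for `z = Hx + a`. -/
theorem linear_observability {M n : ℕ} (hn : 1 ≤ n) (hnM : n ≤ M)
    (H : Matrix (Fin M) (Fin n) ℝ)
    (hrows : ∀ s : Finset (Fin M), s.card = n →
      LinearIndependent ℝ (fun i : s => H i)) :
    ∀ a : Fin M → ℝ, a ≠ 0 → l0 a ≤ M - n →
      ∀ x₀ : Fin n → ℝ, ¬ ∃ x : Fin n → ℝ, H.mulVec x = H.mulVec x₀ + a := by
  intro a ha hl x₀ ⟨x, hx⟩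
  have hcard : n ≤ (Finset.univ.filter fun i => a i = 0).card := by
    have h := Finset.card_filter_add_card_filter_not (s := (Finset.univ : Finset (Fin M)))
      (fun i => a i = 0)
    have h2 : (Finset.univ.filter fun i => ¬ a i = 0).card ≤ M - n := hl
    rw [Finset.card_univ, Fintype.card_fin] at h
    omega
  obtain ⟨s, hs, hsn⟩ := Finset.exists_subset_card_eq hcard
  have hli := hrows s hsn
  have hspan := hli.span_eq_top_of_card_eq_finrank' (by simp [hsn])
  have hy : H.mulVec (x - x₀) = a := by
    rw [Matrix.mulVec_sub, hx]; simp
  have hz : ∀ v ∈ Submodule.span ℝ (Set.range fun i : s => H i), dotProduct v (x - x₀) = 0 := by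
    intro v hv
    induction hv using Submodule.span_induction with
    | mem v hv =>
      obtain ⟨i, rfl⟩ := hv
      have h0 : a i = 0 := (Finset.mem_filter.mp (hs i.2)).2
      rw [← hy] at h0
      exact h0
    | zero => simp
    | add u v _ _ hu hv => rw [add_dotProduct, hu, hv, add_zero]
    | smul c v _ hv => rw [smul_dotProduct, hv, smul_zero]
  have hself := hz (x - x₀) (by rw [hspan]; trivial)
  have h0 : x - x₀ = 0 := dotProduct_self_eq_zero.mp hself
  apply ha
  rw [← hy, h0, Matrix.mulVec_zero]
end

section
/- (Corollary 1, identifiability for the linear model.) Let H be a real M × n matrix such that every collection of n rows of H is linearly independent (n ≤ M). Then every outlier vector a ∈ ℝ^M with ‖a‖₀ ≤ ⌊(M − n)/2⌋ is identifiable for the linear measurement model: for every x_o ∈ ℝ^n, the only pair (x, a') ∈ ℝ^n × ℝ^M satisfying Hx + a' = Hx_o + a and ‖a'‖₀ ≤ ‖a‖₀ is (x_o, a). -/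
/-- Corollary 1 (identifiability for the linear model): if every collection of `n`
rows of `H` is linearly independent (`n ≤ M`), every outlier `a` with
`‖a‖₀ ≤ ⌊(M − n)/2⌋` is identifiable for `z = Hx + a`. -/
theorem linear_identifiability {M n : ℕ} (hn : 1 ≤ n) (hnM : n ≤ M)
    (H : Matrix (Fin M) (Fin n) ℝ)
    (hrows : ∀ s : Finset (Fin M), s.card = n →
      LinearIndependent ℝ (fun i : s => H i)) :
    ∀ a : Fin M → ℝ, l0 a ≤ (M - n) / 2 →
      ∀ x₀ : Fin n → ℝ, ∀ (x : Fin n → ℝ) (a' : Fin M → ℝ),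
        H.mulVec x + a' = H.mulVec x₀ + a → l0 a' ≤ l0 a → x = x₀ ∧ a' = a := by
  intro a ha x₀ x a' h hle
  have key : x = x₀ := by
    have hcard : n ≤ ((Finset.univ.filter fun i => a i ≠ 0) ∪
        (Finset.univ.filter fun i => a' i ≠ 0))ᶜ.card := by
      have h1 := Finset.card_union_le (Finset.univ.filter fun i => a i ≠ 0)
        (Finset.univ.filter fun i => a' i ≠ 0)
      rw [Finset.card_compl, Fintype.card_fin]
      unfold l0 at ha hle
      omega
    obtain ⟨s, hs, hsn⟩ := Finset.exists_subset_card_eq hcard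
    have hspan : Submodule.span ℝ (Set.range (fun i : s => H i)) = ⊤ :=
      (hrows s hsn).span_eq_top_of_card_eq_finrank' (by simp [hsn])
    have hle2 : Submodule.span ℝ (Set.range (fun i : s => H i)) ≤
        LinearMap.ker ((dotProductBilin ℝ ℝ).flip (x - x₀) : (Fin n → ℝ) →ₗ[ℝ] ℝ) := by
      rw [Submodule.span_le]
      rintro _ ⟨⟨i, hi⟩, rfl⟩
      have hi2 := hs hi
      simp only [Finset.mem_compl, Finset.mem_union, Finset.mem_filter, Finset.mem_univ,
        true_and, not_or, not_not] at hi2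
      have h3 := congrFun h i
      simp only [Pi.add_apply, hi2.1, hi2.2, add_zero, Matrix.mulVec] at h3
      change H i ⬝ᵥ (x - x₀) = 0
      rw [dotProduct_sub]
      exact sub_eq_zero.mpr h3
    rw [hspan] at hle2
    have h4 : (x - x₀) ⬝ᵥ (x - x₀) = 0 := hle2 (Submodule.mem_top (x := x - x₀))
    exact sub_eq_zero.mp (dotProduct_self_eq_zero.mp h4)
  subst key
  exact ⟨rfl, add_left_cancel h⟩
end
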